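/- arXiv:2309.15713 — 5 statements merged into one kernel-verified Lean document; each statement's English description precedes it below -/
import Mathlib

section
/- Let B > 0, 0 < a < L, v0 < 0, and let v : ℝ → ℝ be continuous with v0 ≤ v(r) ≤ 0 for all r ≥ 0 and v(r) = 0 for all r ≥ a. Then S − (d(0,2L−a) + d(0,a)) = ∫_0^a [√(B²(2L−r)²/4 − v0) − √(B²r²/4 − v0)] dr ≥ 0; in particular S ≥ d(0,2L−a) + d(0,a). -/
open MeasureTheory Real

/- Past the support `a` of the perturbation the integrand of the Agmon distance is that of the
background potential, and the substitution `r ↦ 2L - r` turns the part over `[a, L]` of the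
reflected integral into an integral over `[L, 2L - a]`. This trades one copy of the distance from
`a` to `L` for the distance from `L` to `2L - a`, leaving only the reflected integral over `[0, a]`,
whose integrand is nonnegative because the background potential increases. -/

section Reflection

open Set

variable {F : Type*} [NormedAddCommGroup F] {a b c : ℝ}

theorem intervalIntegrable_reflection_sub {g : ℝ → F}
    (hg : IntervalIntegrable g volume b (2 * c - b)) :
    IntervalIntegrable (fun r ↦ g (2 * c - r) - g r) volume b (2 * c - b) := by
  have hreflect := (hg.comp_sub_left (2 * c)).symm
  rw [sub_sub_cancel] at hreflect
  exact hreflect.sub hg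

variable [NormedSpace ℝ F] {f g : ℝ → F}

theorem integral_reflection_sub (hg₁ : IntervalIntegrable g volume a c)
    (hg₂ : IntervalIntegrable g volume c (2 * c - a)) :
    ∫ r in a..c, (g (2 * c - r) - g r) =
      (∫ r in c..(2 * c - a), g r) - ∫ r in a..c, g r := by
  have hreflect := (hg₂.comp_sub_left (2 * c)).symm
  have hc : 2 * c - c = c := by ring
  rw [sub_sub_cancel, hc] at hreflect
  rw [intervalIntegral.integral_sub hreflect hg₁, intervalIntegral.integral_comp_sub_left, hc]

theorem integral_eq_integral_add_integral_of_eqOn (hf : IntervalIntegrable f volume b a)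
    (hg : IntervalIntegrable g volume a c) (hfg : EqOn f g (uIcc a c)) :
    ∫ r in b..c, f r = (∫ r in b..a, f r) + ∫ r in a..c, g r := by
  have hf' : IntervalIntegrable f volume a c :=
    hg.congr fun r hr ↦ (hfg (uIoc_subset_uIcc hr)).symm
  rw [← intervalIntegral.integral_add_adjacent_intervals hf hf',
    intervalIntegral.integral_congr hfg]

theorem two_smul_integral_add_integral_reflection_sub (hba : b ≤ a) (hac : a ≤ c)
    (hf : IntervalIntegrable f volume b a) (hg : IntervalIntegrable g volume b (2 * c - b))
    (hfg : EqOn f g (Icc a (2 * c - a))) :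
    (2 : ℝ) • (∫ r in b..c, f r) + ∫ r in b..c, (g (2 * c - r) - g r) =
      (∫ r in b..(2 * c - a), f r) + (∫ r in b..a, f r) +
        ∫ r in b..a, (g (2 * c - r) - g r) := by
  have mem_uIcc {x : ℝ} (hbx : b ≤ x) (hxc : x ≤ 2 * c - b) : x ∈ uIcc b (2 * c - b) :=
    mem_uIcc_of_le hbx hxc
  have hb := mem_uIcc le_rfl (by linarith)
  have ha := mem_uIcc hba (by linarith)
  have hc := mem_uIcc (hba.trans hac) (by linarith)
  have ha' : 2 * c - a ∈ uIcc b (2 * c - b) := mem_uIcc (by linarith) (by linarith)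
  have hg_ac := hg.mono_set (uIcc_subset_uIcc ha hc)
  have hg_ca' := hg.mono_set (uIcc_subset_uIcc hc ha')
  have hfg' : EqOn f g (uIcc a (2 * c - a)) := by rwa [uIcc_of_le (by linarith)]
  have hf_c := integral_eq_integral_add_integral_of_eqOn hf hg_ac <|
    hfg'.mono (uIcc_subset_uIcc_left (mem_uIcc_of_le hac (by linarith)))
  have hf_a' := integral_eq_integral_add_integral_of_eqOn hf (hg_ac.trans hg_ca') hfg'
  have hdiff := intervalIntegrable_reflection_sub hg
  rw [← intervalIntegral.integral_add_adjacent_intervals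
      (hdiff.mono_set (uIcc_subset_uIcc hb ha)) (hdiff.mono_set (uIcc_subset_uIcc ha hc)),
    integral_reflection_sub hg_ac hg_ca', hf_c, hf_a',
    ← intervalIntegral.integral_add_adjacent_intervals hg_ac hg_ca']
  module

theorem integral_reflection_sub_nonneg_of_monotoneOn {g : ℝ → ℝ} (hba : b ≤ a) (hac : a ≤ c)
    (hg : MonotoneOn g (Icc b (2 * c - b))) :
    0 ≤ ∫ r in b..a, (g (2 * c - r) - g r) :=
  intervalIntegral.integral_nonneg hba fun r ⟨hbr, hra⟩ ↦ sub_nonneg.2 <|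
    hg ⟨hbr, by linarith⟩ ⟨by linarith, by linarith⟩ (by linarith)

end Reflection

theorem intervalIntegrable_sqrt {f : ℝ → ℝ} {μ : Measure ℝ} [IsLocallyFiniteMeasure μ] {a b : ℝ}
    (hf : IntervalIntegrable f μ a b) : IntervalIntegrable (fun r ↦ √(f r)) μ a b := by
  have sqrt_le_one_add_abs (x : ℝ) : √x ≤ 1 + |x| := by
    rw [sqrt_le_left (by positivity)]
    nlinarith [le_abs_self x, abs_nonneg x]
  have hbound : IntervalIntegrable (fun r ↦ 1 + |f r|) μ a b := intervalIntegrable_const.add hf.abs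
  refine hbound.mono_fun'
    (continuous_sqrt.comp_aestronglyMeasurable hf.def'.aestronglyMeasurable) (.of_forall fun r ↦ ?_)
  simpa only [norm_of_nonneg (sqrt_nonneg _)] using sqrt_le_one_add_abs (f r)

/-- The signed Agmon distance from `r₁` to `r₂` at energy `E` in the potential `V`. Since `√x = 0`
for `x ≤ 0`, this is the length for the Agmon metric `(V - E)₊ dr²`. -/
noncomputable def agmonDist (V : ℝ → ℝ) (E r₁ r₂ : ℝ) : ℝ :=
  ∫ r in r₁..r₂, √(V r - E)

/-- The integral over `[0, x]` of the excess of the Agmon integrand of the background potential `W`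
at the point `2L - r` over its value at `r`. In the magnetic case `W r = B² r² / 4`. -/
noncomputable def reflectionExcess (W : ℝ → ℝ) (E L x : ℝ) : ℝ :=
  ∫ r in (0 : ℝ)..x, (√(W (2 * L - r) - E) - √(W r - E))

/-- The quantity `S`: twice the Agmon distance in the potential `V` from `0` to the centre `L` of
the reflection `r ↦ 2L - r`, plus the reflection excess of the background potential `W` over
`[0, L]`. -/
noncomputable def tunnelingAction (W V : ℝ → ℝ) (E L : ℝ) : ℝ :=
  2 * agmonDist V E 0 L + reflectionExcess W E L L

theorem stmt_1_general {W V : ℝ → ℝ} {E a L : ℝ} (ha : 0 ≤ a) (haL : a ≤ L)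
    (hW : MonotoneOn W (Set.Icc 0 (2 * L))) (hV : IntervalIntegrable V volume 0 a)
    (hVW : Set.EqOn V W (Set.Icc a (2 * L - a))) :
    tunnelingAction W V E L - (agmonDist V E 0 (2 * L - a) + agmonDist V E 0 a) =
        reflectionExcess W E L a ∧
      0 ≤ reflectionExcess W E L a ∧
      agmonDist V E 0 (2 * L - a) + agmonDist V E 0 a ≤ tunnelingAction W V E L := by
  have hf : IntervalIntegrable (fun r ↦ √(V r - E)) volume 0 a :=
    intervalIntegrable_sqrt (hV.sub intervalIntegrable_const)
  have hg : MonotoneOn (fun r ↦ √(W r - E)) (Set.Icc 0 (2 * L - 0)) := by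
    rw [sub_zero]
    exact fun x hx y hy hxy ↦ sqrt_le_sqrt (sub_le_sub_right (hW hx hy hxy) E)
  have hg_int : IntervalIntegrable (fun r ↦ √(W r - E)) volume 0 (2 * L - 0) :=
    MonotoneOn.intervalIntegrable (by rwa [Set.uIcc_of_le (by linarith)])
  have hS : tunnelingAction W V E L =
      agmonDist V E 0 (2 * L - a) + agmonDist V E 0 a + reflectionExcess W E L a :=
    two_smul_integral_add_integral_reflection_sub ha haL hf hg_int
      (hVW.comp_left (g := fun x ↦ √(x - E)))
  have hexcess : 0 ≤ reflectionExcess W E L a :=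
    integral_reflection_sub_nonneg_of_monotoneOn ha haL hg
  exact ⟨sub_eq_of_eq_add' hS, hexcess, hS ▸ le_add_of_nonneg_right hexcess⟩

theorem monotoneOn_sq_mul_sq_div_four (B : ℝ) :
    MonotoneOn (fun r : ℝ ↦ B ^ 2 * r ^ 2 / 4) (Set.Ici 0) := by
  intro x (hx : 0 ≤ x) y _ hxy
  dsimp only
  gcongr

/-- `S - (d(0,2L-a) + d(0,a)) = ∫_0^a [√(B²(2L-r)²/4 - v0) - √(B²r²/4 - v0)] dr ≥ 0`,
hence `S ≥ d(0,2L-a) + d(0,a)`. -/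
theorem stmt_1 (B a L v0 : ℝ) (v : ℝ → ℝ)
    (hB : 0 < B) (ha : 0 < a) (haL : a < L) (hv0 : v0 < 0)
    (hv : Continuous v)
    (hvlb : ∀ r, 0 ≤ r → v0 ≤ v r) (hvub : ∀ r, 0 ≤ r → v r ≤ 0)
    (hvsupp : ∀ r, a ≤ r → v r = 0)
    (d : ℝ → ℝ → ℝ)
    (hd : ∀ r1 r2, d r1 r2 = ∫ r in r1..r2, Real.sqrt (B^2 * r^2 / 4 + v r - v0))
    (S : ℝ)
    (hS : S = 2 * d 0 L + ∫ r in (0:ℝ)..L,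
        (Real.sqrt (B^2 * (2*L - r)^2 / 4 - v0) - Real.sqrt (B^2 * r^2 / 4 - v0))) :
    S - (d 0 (2*L - a) + d 0 a) = (∫ r in (0:ℝ)..a,
        (Real.sqrt (B^2 * (2*L - r)^2 / 4 - v0) - Real.sqrt (B^2 * r^2 / 4 - v0)))
    ∧ 0 ≤ (∫ r in (0:ℝ)..a,
        (Real.sqrt (B^2 * (2*L - r)^2 / 4 - v0) - Real.sqrt (B^2 * r^2 / 4 - v0)))
    ∧ d 0 (2*L - a) + d 0 a ≤ S := by
  obtain rfl : d = agmonDist (fun r ↦ B ^ 2 * r ^ 2 / 4 + v r) v0 := funext₂ hd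
  subst hS
  exact stmt_1_general ha.le haL.le ((monotoneOn_sq_mul_sq_div_four B).mono Set.Icc_subset_Ici_self)
    (Continuous.intervalIntegrable (by fun_prop) 0 a) fun r hr ↦ by simp [hvsupp r hr.1]
end

section
/- Let B > 0, L > 0, v0 < 0, f(t) = (B·L²/4)·(1+2t) + ((−v0)/(2B))·log((1+t)/t), and t_L = (1/2)·(−1 + √(1 + 4(−v0)/(B²L²))). Then f(t_L) = ∫_0^L √(B²r²/4 − v0) dr. -/
open MeasureTheory Real

/-!
In the dimensionless variable `y = B * L / (2 * √(-v0))`, rescaling `r` turns the integral into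
`(-v0) / B * (y * √(1 + y ^ 2) + arsinh y)`. The critical point equation for `f` reads
`4 * t * (1 + t) * y ^ 2 = 1`, and for its positive solution the two terms of `f t` are exactly the
two terms of this expression, since `(1 + 2 * t) * y = √(1 + y ^ 2)` and
`log ((1 + t) / t) = 2 * arsinh y`.
-/

section Integral

lemma hasDerivAt_sqrt_one_add_sq (x : ℝ) :
    HasDerivAt (fun x : ℝ ↦ √(1 + x ^ 2)) (x / √(1 + x ^ 2)) x := by
  have inner : HasDerivAt (fun x : ℝ ↦ 1 + x ^ 2) (2 * x) x := by
    simpa using (hasDerivAt_pow 2 x).const_add 1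
  exact (inner.sqrt (by positivity)).congr_deriv (mul_div_mul_left _ _ two_ne_zero)

lemma hasDerivAt_mul_sqrt_one_add_sq_add_arsinh (x : ℝ) :
    HasDerivAt (fun x : ℝ ↦ x * √(1 + x ^ 2) + arsinh x) (2 * √(1 + x ^ 2)) x := by
  refine (((hasDerivAt_id x).mul (hasDerivAt_sqrt_one_add_sq x)).add
    (hasDerivAt_arsinh x)).congr_deriv ?_
  have sq_sqrt : √(1 + x ^ 2) ^ 2 = 1 + x ^ 2 := Real.sq_sqrt (by positivity)
  simp only [id]
  field_simp
  linear_combination -sq_sqrt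

theorem integral_sqrt_one_add_sq (a b : ℝ) :
    ∫ x in a..b, √(1 + x ^ 2) =
      ((b * √(1 + b ^ 2) + arsinh b) - (a * √(1 + a ^ 2) + arsinh a)) / 2 := by
  have two_mul_integral : ∫ x in a..b, 2 * √(1 + x ^ 2) =
      (b * √(1 + b ^ 2) + arsinh b) - (a * √(1 + a ^ 2) + arsinh a) :=
    intervalIntegral.integral_eq_sub_of_hasDerivAt
      (fun x _ ↦ hasDerivAt_mul_sqrt_one_add_sq_add_arsinh x)
      (Continuous.intervalIntegrable (by fun_prop) a b)
  rw [← two_mul_integral, intervalIntegral.integral_const_mul,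
    mul_div_cancel_left₀ _ two_ne_zero]

theorem integral_sqrt_sq_mul_one_add_sq {s k : ℝ} (hs : 0 ≤ s) (hk : k ≠ 0) (a b : ℝ) :
    ∫ x in a..b, √(s ^ 2 * (1 + (k * x) ^ 2)) =
      s / (2 * k) * ((k * b * √(1 + (k * b) ^ 2) + arsinh (k * b)) -
        (k * a * √(1 + (k * a) ^ 2) + arsinh (k * a))) := by
  simp only [Real.sqrt_mul (sq_nonneg s), Real.sqrt_sq hs]
  rw [intervalIntegral.integral_const_mul,
    intervalIntegral.integral_comp_mul_left (fun x ↦ √(1 + x ^ 2)) hk,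
    integral_sqrt_one_add_sq, smul_eq_mul]
  field_simp

end Integral

section CriticalPoint

lemma half_neg_one_add_sqrt_pos {q : ℝ} (hq : 0 < q) : 0 < 1 / 2 * (-1 + √(1 + q)) := by
  have one_lt : 1 < √(1 + q) := Real.lt_sqrt_of_sq_lt (by linarith)
  linarith

lemma four_mul_mul_one_add_half_neg_one_add_sqrt {q : ℝ} (hq : -1 ≤ q) :
    4 * (1 / 2 * (-1 + √(1 + q))) * (1 + 1 / 2 * (-1 + √(1 + q))) = q := by
  linear_combination Real.sq_sqrt (show 0 ≤ 1 + q by linarith)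

variable {t y : ℝ}

lemma sqrt_one_add_sq_eq_of_four_mul_eq_one (ht : 0 ≤ t) (hy : 0 ≤ y)
    (h : 4 * t * (1 + t) * y ^ 2 = 1) : √(1 + y ^ 2) = (1 + 2 * t) * y := by
  rw [Real.sqrt_eq_iff_mul_self_eq (by positivity) (by positivity)]
  linear_combination -h

lemma log_one_add_div_self_eq_two_mul_arsinh (ht : 0 < t) (hy : 0 ≤ y)
    (h : 4 * t * (1 + t) * y ^ 2 = 1) : log ((1 + t) / t) = 2 * arsinh y := by
  have sq_eq : (1 + t) / t = (y + √(1 + y ^ 2)) ^ 2 := by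
    rw [sqrt_one_add_sq_eq_of_four_mul_eq_one ht.le hy h, div_eq_iff ht.ne']
    linear_combination -(1 + t) * h
  rw [sq_eq, Real.log_pow, arsinh, Nat.cast_ofNat]

lemma mul_sqrt_one_add_sq_add_arsinh_of_four_mul_eq_one (ht : 0 < t) (hy : 0 ≤ y)
    (h : 4 * t * (1 + t) * y ^ 2 = 1) :
    y * √(1 + y ^ 2) + arsinh y = (1 + 2 * t) * y ^ 2 + log ((1 + t) / t) / 2 := by
  rw [sqrt_one_add_sq_eq_of_four_mul_eq_one ht.le hy h,
    log_one_add_div_self_eq_two_mul_arsinh ht hy h]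
  ring

end CriticalPoint

/-- `f(t_L) = ∫_0^L √(B²r²/4 - v0) dr`. -/
theorem stmt_8 (B L v0 : ℝ) (hB : 0 < B) (hL : 0 < L) (hv0 : v0 < 0)
    (f : ℝ → ℝ)
    (hf : ∀ t, 0 < t → f t = B * L^2 / 4 * (1 + 2*t) + (-v0) / (2*B) * Real.log ((1+t)/t))
    (tL : ℝ)
    (htL : tL = 1/2 * (-1 + Real.sqrt (1 + 4 * (-v0) / (B^2 * L^2)))) :
    f tL = ∫ r in (0:ℝ)..L, Real.sqrt (B^2 * r^2 / 4 - v0) := by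
  obtain ⟨s, hs, hs_sq⟩ : ∃ s : ℝ, 0 < s ∧ -v0 = s ^ 2 :=
    ⟨√(-v0), Real.sqrt_pos.2 (by linarith), (Real.sq_sqrt (by linarith)).symm⟩
  rw [hs_sq] at htL hf
  set k := B / (2 * s) with hk
  have k_pos : 0 < k := by positivity
  have rescale (r : ℝ) : B ^ 2 * r ^ 2 / 4 - v0 = s ^ 2 * (1 + (k * r) ^ 2) := by
    rw [sub_eq_add_neg, hs_sq, hk]
    field
  have q_pos : 0 < 4 * s ^ 2 / (B ^ 2 * L ^ 2) := by positivity
  have tL_pos : 0 < tL := htL ▸ half_neg_one_add_sqrt_pos q_pos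
  have crit : 4 * tL * (1 + tL) * (k * L) ^ 2 = 1 := by
    rw [htL, four_mul_mul_one_add_half_neg_one_add_sqrt (by linarith), hk]
    field_simp
    norm_num
  calc f tL = s / (2 * k) * ((1 + 2 * tL) * (k * L) ^ 2 + log ((1 + tL) / tL) / 2) := by
        rw [hf tL tL_pos, hk]
        field
    _ = s / (2 * k) * (k * L * √(1 + (k * L) ^ 2) + arsinh (k * L)) := by
        rw [mul_sqrt_one_add_sq_add_arsinh_of_four_mul_eq_one tL_pos (by positivity) crit]
    _ = ∫ r in (0 : ℝ)..L, √(B ^ 2 * r ^ 2 / 4 - v0) := by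
        simp [rescale, integral_sqrt_sq_mul_one_add_sq hs.le k_pos.ne']
end

section
/- Let B > 0, L > 0, v0 < 0, and define g : (0,∞)² → ℝ by g(s,t) = (B·L²/2)·(1 + t + s + 1/(1+t+s)) + ((−v0)/(2B))·(log((1+t)/t) + log((1+s)/s)). Set N = (−v0)/(B²L²) and t⋆ = (1/2)·√N − 1/2 + (1/2)·√(1+N). Then (t⋆, t⋆) is the unique critical point of g on (0,∞)², and it is a global minimum of g on (0,∞)². -/
open Real

/-!
The function `g` is strictly convex on the open quadrant: `x + 1 / x` is convex on `(0, ∞)` and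
`log ((1 + t) / t)` is strictly convex there, its derivative `-1 / (t (1 + t))` being increasing.
A critical point of a strictly convex function is its unique minimiser, hence its only critical
point, so it suffices to check that `(t⋆, t⋆)` is critical. With `w = 1 + 2 t⋆ = √N + √(1 + N)`
this is the equation `w ^ 2 - 1 = 2 √N w`.
-/

section CriticalPoints

variable {E : Type*} [NormedAddCommGroup E] [NormedSpace ℝ E] {s : Set E} {f : E → ℝ} {x y : E}

theorem isMinOn_of_convexOn_of_hasFDerivWithinAt_zero (hf : ConvexOn ℝ s f) (hx : x ∈ s)
    (hfx : HasFDerivWithinAt f (0 : E →L[ℝ] ℝ) s x) : IsMinOn f s x := by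
  intro y hy
  let line : ℝ →ᵃ[ℝ] E := AffineMap.lineMap x y
  have hline₀ : line 0 = x := AffineMap.lineMap_apply_zero x y
  have hline₁ : line 1 = y := AffineMap.lineMap_apply_one x y
  have hderiv : HasDerivWithinAt (f ∘ line) 0 (line ⁻¹' s) 0 :=
    (hline₀ ▸ hfx).comp_hasDerivWithinAt 0 AffineMap.hasDerivWithinAt_lineMap
      (Set.mapsTo_preimage line s)
  have hslope : 0 ≤ slope (f ∘ line) 0 1 :=
    (hf.comp_affineMap line).le_slope_of_hasDerivWithinAt (by simpa [hline₀] using hx)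
      (by simpa [hline₁] using hy) one_pos hderiv
  simpa [slope_def_field, hline₀, hline₁] using hslope

theorem hasFDerivAt_zero_iff_eq_of_strictConvexOn (hf : StrictConvexOn ℝ s f) (hx : x ∈ s)
    (hfx : HasFDerivAt f (0 : E →L[ℝ] ℝ) x) (hy : y ∈ s) :
    HasFDerivAt f (0 : E →L[ℝ] ℝ) y ↔ y = x := by
  have isMinOn_of_critical {z : E} (hz : z ∈ s) (hfz : HasFDerivAt f (0 : E →L[ℝ] ℝ) z) :
      IsMinOn f s z :=
    isMinOn_of_convexOn_of_hasFDerivWithinAt_zero hf.convexOn hz hfz.hasFDerivWithinAt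
  refine ⟨fun hfy ↦ ?_, fun hyx ↦ hyx ▸ hfx⟩
  exact hf.eq_of_isMinOn (isMinOn_of_critical hy hfy) (isMinOn_of_critical hx hfx) hy hx

end CriticalPoints

theorem strictConvexOn_prod_add {𝕜 E F β : Type*} [Semiring 𝕜] [PartialOrder 𝕜]
    [AddCommMonoid E] [Module 𝕜 E] [AddCommMonoid F] [Module 𝕜 F]
    [AddCommMonoid β] [PartialOrder β] [IsOrderedCancelAddMonoid β] [Module 𝕜 β]
    {s : Set E} {t : Set F} {f : E → β} {g : F → β}
    (hf : StrictConvexOn 𝕜 s f) (hg : StrictConvexOn 𝕜 t g) :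
    StrictConvexOn 𝕜 (s ×ˢ t) fun p ↦ f p.1 + g p.2 := by
  refine ⟨hf.1.prod hg.1, ?_⟩
  rintro ⟨x₁, x₂⟩ ⟨hx₁, hx₂⟩ ⟨y₁, y₂⟩ ⟨hy₁, hy₂⟩ hne a b ha hb hab
  have split_sum : a • (f x₁ + g x₂) + b • (f y₁ + g y₂) =
      (a • f x₁ + b • f y₁) + (a • g x₂ + b • g y₂) := by
    rw [smul_add, smul_add, add_add_add_comm]
  refine lt_of_lt_of_eq ?_ split_sum.symm
  by_cases h₁ : x₁ = y₁
  · have h₂ : x₂ ≠ y₂ := fun h₂ ↦ hne (Prod.ext h₁ h₂)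
    exact add_lt_add_of_le_of_lt (hf.convexOn.2 hx₁ hy₁ ha.le hb.le hab)
      (hg.2 hx₂ hy₂ h₂ ha hb hab)
  · exact add_lt_add_of_lt_of_le (hf.2 hx₁ hy₁ h₁ ha hb hab)
      (hg.convexOn.2 hx₂ hy₂ ha.le hb.le hab)

theorem strictConvexOn_const_smul {𝕜 E β : Type*} [CommSemiring 𝕜] [PartialOrder 𝕜]
    [AddCommMonoid E] [SMul 𝕜 E] [AddCommMonoid β] [PartialOrder β] [Module 𝕜 β]
    [PosSMulStrictMono 𝕜 β] {s : Set E} {f : E → β} {c : 𝕜}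
    (hc : 0 < c) (hf : StrictConvexOn 𝕜 s f) : StrictConvexOn 𝕜 s fun x ↦ c • f x := by
  refine ⟨hf.1, fun x hx y hy hxy a b ha hb hab ↦ ?_⟩
  calc c • f (a • x + b • y) < c • (a • f x + b • f y) :=
        smul_lt_smul_of_pos_left (hf.2 hx hy hxy ha hb hab) hc
    _ = a • c • f x + b • c • f y := by rw [smul_add, smul_comm c, smul_comm c]

theorem hasDerivAt_add_one_div {x : ℝ} (hx : x ≠ 0) :
    HasDerivAt (fun x : ℝ ↦ x + 1 / x) (1 - 1 / x ^ 2) x := by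
  simpa [sub_eq_add_neg] using (hasDerivAt_id' x).fun_add (hasDerivAt_inv hx)

theorem convexOn_add_one_div : ConvexOn ℝ (Set.Ioi 0) fun x : ℝ ↦ x + 1 / x := by
  simpa [Pi.add_def] using (convexOn_id (convex_Ioi (0 : ℝ))).add (convexOn_zpow (-1))

theorem hasDerivAt_log_one_add_div {t : ℝ} (ht : t ≠ 0) (ht' : 1 + t ≠ 0) :
    HasDerivAt (fun t ↦ log ((1 + t) / t)) (-(1 / (t * (1 + t)))) t := by
  convert (((hasDerivAt_id' t).const_add 1).fun_div (hasDerivAt_id' t) ht).log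
    (div_ne_zero ht' ht) using 1
  field_simp
  ring

theorem strictConvexOn_log_one_add_div :
    StrictConvexOn ℝ (Set.Ioi 0) fun t ↦ log ((1 + t) / t) := by
  have hderiv {t : ℝ} (ht : 0 < t) :=
    hasDerivAt_log_one_add_div ht.ne' (add_pos one_pos ht).ne'
  refine StrictMonoOn.strictConvexOn_of_deriv (convex_Ioi 0)
    (fun t ht ↦ (hderiv ht).continuousAt.continuousWithinAt) ?_
  rw [interior_Ioi]
  intro s hs t ht hst
  rw [Set.mem_Ioi] at hs ht
  rw [(hderiv hs).deriv, (hderiv ht).deriv, neg_lt_neg_iff]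
  gcongr

/-- The function `g` of the theorem, with coefficients `a = B * L ^ 2 / 2` and
`c = -v0 / (2 * B)`. -/
noncomputable def energy (a c : ℝ) (p : ℝ × ℝ) : ℝ :=
  a * (1 + (p.1 + p.2) + 1 / (1 + (p.1 + p.2))) +
    c * (log ((1 + p.1) / p.1) + log ((1 + p.2) / p.2))

theorem strictConvexOn_energy {a c : ℝ} (ha : 0 ≤ a) (hc : 0 < c) :
    StrictConvexOn ℝ (Set.Ioi 0 ×ˢ Set.Ioi 0) (energy a c) := by
  have hlog := strictConvexOn_prod_add strictConvexOn_log_one_add_div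
    strictConvexOn_log_one_add_div
  have hsum : ConvexOn ℝ (Set.Ioi 0 ×ˢ Set.Ioi 0) fun p : ℝ × ℝ ↦
      1 + (p.1 + p.2) + 1 / (1 + (p.1 + p.2)) := by
    refine ((convexOn_add_one_div.translate_right 1).comp_linearMap
      (LinearMap.fst ℝ ℝ ℝ + LinearMap.snd ℝ ℝ ℝ)).subset ?_ hlog.1
    rintro p ⟨hp₁, hp₂⟩
    exact add_pos zero_lt_one (add_pos (Set.mem_Ioi.1 hp₁) (Set.mem_Ioi.1 hp₂))
  exact (hsum.smul ha).add_strictConvexOn (strictConvexOn_const_smul hc hlog)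

theorem hasFDerivAt_energy (a c : ℝ) {p : ℝ × ℝ} (hp₁ : 0 < p.1) (hp₂ : 0 < p.2) :
    HasFDerivAt (energy a c)
      (a • (1 - 1 / (1 + (p.1 + p.2)) ^ 2) •
          (ContinuousLinearMap.fst ℝ ℝ ℝ + ContinuousLinearMap.snd ℝ ℝ ℝ) +
        c • (-(1 / (p.1 * (1 + p.1))) • ContinuousLinearMap.fst ℝ ℝ ℝ +
          -(1 / (p.2 * (1 + p.2))) • ContinuousLinearMap.snd ℝ ℝ ℝ)) p := by
  have hfst : HasFDerivAt Prod.fst (ContinuousLinearMap.fst ℝ ℝ ℝ) p := hasFDerivAt_fst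
  have hsnd : HasFDerivAt Prod.snd (ContinuousLinearMap.snd ℝ ℝ ℝ) p := hasFDerivAt_snd
  have hsum := (hasDerivAt_add_one_div (x := 1 + (p.1 + p.2)) (by positivity)).comp_hasFDerivAt p
    ((hfst.add hsnd).const_add 1)
  have hlog₁ := (hasDerivAt_log_one_add_div hp₁.ne' (by positivity)).comp_hasFDerivAt p hfst
  have hlog₂ := (hasDerivAt_log_one_add_div hp₂.ne' (by positivity)).comp_hasFDerivAt p hsnd
  exact (hsum.const_mul a).add ((hlog₁.add hlog₂).const_mul c)

theorem hasFDerivAt_energy_diag_zero {a c t : ℝ} (ht : 0 < t)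
    (hcrit : a * (1 - 1 / (1 + 2 * t) ^ 2) = c / (t * (1 + t))) :
    HasFDerivAt (energy a c) (0 : ℝ × ℝ →L[ℝ] ℝ) (t, t) := by
  convert hasFDerivAt_energy a c (p := (t, t)) ht ht using 1
  rw [← smul_add, smul_smul, smul_smul, ← add_smul, ← two_mul, hcrit]
  rw [mul_neg, mul_one_div, add_neg_cancel, zero_smul]

/-- The common coordinate `t⋆` of the critical point on the diagonal, as a function of `N`. -/
noncomputable def criticalCoord (N : ℝ) : ℝ := 1 / 2 * √N - 1 / 2 + 1 / 2 * √(1 + N)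

theorem criticalCoord_pos {N : ℝ} (hN : 0 < N) : 0 < criticalCoord N := by
  have hsqrt : 0 < √N := sqrt_pos.2 hN
  have hsqrt' : 1 < √(1 + N) := lt_sqrt_of_sq_lt (by linarith)
  unfold criticalCoord
  linarith

theorem two_mul_criticalCoord_mul_one_add {N : ℝ} (hN : 0 ≤ N) :
    2 * (criticalCoord N * (1 + criticalCoord N)) = √N * (1 + 2 * criticalCoord N) := by
  unfold criticalCoord
  linear_combination (1 / 2) * sq_sqrt (add_nonneg zero_le_one hN) - (1 / 2) * sq_sqrt hN

theorem one_sub_one_div_sq_criticalCoord {N : ℝ} (hN : 0 < N) :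
    1 - 1 / (1 + 2 * criticalCoord N) ^ 2 =
      N / (criticalCoord N * (1 + criticalCoord N)) := by
  have hmul := two_mul_criticalCoord_mul_one_add hN.le
  have hpos := criticalCoord_pos hN
  generalize criticalCoord N = t at hmul hpos ⊢
  have hsq : 4 * (t * (1 + t)) ^ 2 = N * (1 + 2 * t) ^ 2 := by
    calc 4 * (t * (1 + t)) ^ 2 = (2 * (t * (1 + t))) ^ 2 := by ring
      _ = N * (1 + 2 * t) ^ 2 := by rw [hmul, mul_pow, sq_sqrt hN.le]
  field_simp
  linear_combination hsq

theorem hasFDerivAt_energy_criticalCoord_zero (a : ℝ) {N : ℝ} (hN : 0 < N) :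
    HasFDerivAt (energy a (a * N)) (0 : ℝ × ℝ →L[ℝ] ℝ) (criticalCoord N, criticalCoord N) :=
  hasFDerivAt_energy_diag_zero (criticalCoord_pos hN) <| by
    rw [one_sub_one_div_sq_criticalCoord hN, mul_div_assoc]

/-- `(t⋆, t⋆)` is the unique critical point of
`g(s,t) = (BL²/2)(1+t+s+1/(1+t+s)) + ((-v0)/(2B))(log((1+t)/t) + log((1+s)/s))`
on `(0,∞)²`, and it is a global minimum there. -/
theorem stmt_12 (B L v0 : ℝ) (hB : 0 < B) (hL : 0 < L) (hv0 : v0 < 0)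
    (G : ℝ × ℝ → ℝ)
    (hG : ∀ s t : ℝ, G (s, t) = B * L^2 / 2 * (1 + t + s + 1/(1 + t + s))
        + (-v0) / (2*B) * (Real.log ((1+t)/t) + Real.log ((1+s)/s)))
    (N tstar : ℝ) (hN : N = (-v0) / (B^2 * L^2))
    (htstar : tstar = 1/2 * Real.sqrt N - 1/2 + 1/2 * Real.sqrt (1 + N)) :
    (∀ p : ℝ × ℝ, 0 < p.1 → 0 < p.2 →
        (HasFDerivAt G (0 : ℝ × ℝ →L[ℝ] ℝ) p ↔ p = (tstar, tstar)))
    ∧ (∀ s t : ℝ, 0 < s → 0 < t → G (tstar, tstar) ≤ G (s, t)) := by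
  have hNpos : 0 < N := hN ▸ div_pos (neg_pos.2 hv0) (by positivity)
  have ha : 0 < B * L ^ 2 / 2 := by positivity
  have hc : (-v0) / (2 * B) = B * L ^ 2 / 2 * N := by
    rw [hN]
    field_simp
  obtain rfl : G = energy (B * L ^ 2 / 2) (B * L ^ 2 / 2 * N) := by
    ext ⟨s, t⟩
    rw [hG, hc, energy]
    ring
  obtain rfl : tstar = criticalCoord N := htstar
  have hconv := strictConvexOn_energy ha.le (mul_pos ha hNpos)
  have hmem : (criticalCoord N, criticalCoord N) ∈ Set.Ioi (0 : ℝ) ×ˢ Set.Ioi (0 : ℝ) :=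
    Set.mk_mem_prod (criticalCoord_pos hNpos) (criticalCoord_pos hNpos)
  have hcrit := hasFDerivAt_energy_criticalCoord_zero (B * L ^ 2 / 2) hNpos
  refine ⟨fun p hp₁ hp₂ ↦ ?_, fun s t hs ht ↦ ?_⟩
  · exact hasFDerivAt_zero_iff_eq_of_strictConvexOn hconv hmem hcrit ⟨hp₁, hp₂⟩
  · exact isMinOn_of_convexOn_of_hasFDerivWithinAt_zero hconv.convexOn hmem
      hcrit.hasFDerivWithinAt (Set.mk_mem_prod hs ht)
end

section
/- Let B > 0, L > 0, v0 < 0, N = (−v0)/(B²L²), and t⋆ = (1/2)·√N − 1/2 + (1/2)·√(1+N). Then g(t⋆, t⋆) = B·L²·(√(1+N) + N·log((1 + √(1+N))/√N)) = ∫_0^{2L} √(B²r²/4 + (−v0)) dr, where g(s,t) = (B·L²/2)·(1 + t + s + 1/(1+t+s)) + ((−v0)/(2B))·(log((1+t)/t) + log((1+s)/s)). -/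
open MeasureTheory Real

/-! Everything scales: `g = B L² · G` with `G = reducedG N`, and `r = 2 L u` turns the
integral into `B L² · 2 ∫₀¹ √(N + u²) du`. At the diagonal point, `1 + 2 t⋆ = √N + √(1 + N)` has
reciprocal `√(1 + N) - √N`, so the rational part of `G` collapses to `√(1 + N)`, while the
logarithm becomes `log ((1 + √(1 + N)) / √N) = arsinh (1 / √N)`, the value produced by the
primitive `(x √(c + x²) + c arsinh (x / √c)) / 2` of `√(c + x²)`. -/

section Primitive

variable {c : ℝ}

lemma sqrt_add_sq_eq_sqrt_mul_sqrt_one_add_div_sq (hc : 0 < c) (x : ℝ) :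
    √(c + x ^ 2) = √c * √(1 + (x / √c) ^ 2) := by
  rw [← sqrt_mul hc.le, div_pow, sq_sqrt hc.le, mul_add, mul_one, mul_div_cancel₀ _ hc.ne']

lemma arsinh_div_sqrt (hc : 0 < c) (x : ℝ) :
    arsinh (x / √c) = log ((x + √(c + x ^ 2)) / √c) := by
  rw [arsinh, sqrt_add_sq_eq_sqrt_mul_sqrt_one_add_div_sq hc, add_div,
    mul_div_cancel_left₀ _ (sqrt_pos.2 hc).ne']

lemma hasDerivAt_arsinh_div_sqrt (hc : 0 < c) (x : ℝ) :
    HasDerivAt (fun x ↦ arsinh (x / √c)) (√(c + x ^ 2))⁻¹ x := by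
  refine ((hasDerivAt_id' x).div_const √c).arsinh.congr_deriv ?_
  rw [sqrt_add_sq_eq_sqrt_mul_sqrt_one_add_div_sq hc, mul_inv_rev, smul_eq_mul, one_div]

lemma hasDerivAt_primitive_sqrt_add_sq (hc : 0 < c) (x : ℝ) :
    HasDerivAt (fun x ↦ (x * √(c + x ^ 2) + c * arsinh (x / √c)) / 2) √(c + x ^ 2) x := by
  have hpos : 0 < c + x ^ 2 := by positivity
  have hsqrt : HasDerivAt (fun x ↦ √(c + x ^ 2)) (x / √(c + x ^ 2)) x := by
    refine (((hasDerivAt_pow 2 x).const_add c).sqrt hpos.ne').congr_deriv ?_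
    rw [Nat.cast_ofNat, pow_one, mul_div_mul_left _ _ two_ne_zero]
  refine ((((hasDerivAt_id' x).mul hsqrt).add
    ((hasDerivAt_arsinh_div_sqrt hc x).const_mul c)).div_const 2).congr_deriv ?_
  have hsqrt_ne : √(c + x ^ 2) ≠ 0 := (sqrt_pos.2 hpos).ne'
  field_simp
  linear_combination -sq_sqrt hpos.le

theorem integral_sqrt_add_sq (hc : 0 < c) (p q : ℝ) :
    ∫ x in p..q, √(c + x ^ 2) =
      (q * √(c + q ^ 2) + c * arsinh (q / √c)) / 2 -
        (p * √(c + p ^ 2) + c * arsinh (p / √c)) / 2 :=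
  intervalIntegral.integral_eq_sub_of_hasDerivAt
    (fun x _ ↦ hasDerivAt_primitive_sqrt_add_sq hc x)
    (Continuous.intervalIntegrable (by fun_prop) _ _)

lemma two_mul_integral_zero_one_sqrt_add_sq (hc : 0 < c) :
    2 * ∫ x in (0 : ℝ)..1, √(c + x ^ 2) = √(1 + c) + c * log ((1 + √(1 + c)) / √c) := by
  rw [integral_sqrt_add_sq hc, arsinh_div_sqrt hc 1, zero_div, arsinh_zero, one_pow, add_comm c]
  ring

end Primitive

/-- The dimensionless form `g / (B L²)` of `g`, which depends on the parameters through
`N = -v0 / (B² L²)` alone; equivalently, `g` for `B = L = 1` and `v0 = -N`. -/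
noncomputable def reducedG (N s t : ℝ) : ℝ :=
  (1 + t + s + 1 / (1 + t + s)) / 2 + N / 2 * (log ((1 + t) / t) + log ((1 + s) / s))

/-- The common coordinate `t⋆` of the diagonal point `(t⋆, t⋆)` at which `g` takes its minimum; it
depends on `N` alone. -/
noncomputable def diagPoint (N : ℝ) : ℝ :=
  1 / 2 * √N - 1 / 2 + 1 / 2 * √(1 + N)

section DiagPoint

variable {N : ℝ}

lemma sq_sqrt_one_add_sub_sq_sqrt (hN : 0 ≤ N) : √(1 + N) ^ 2 - √N ^ 2 = 1 := by
  rw [sq_sqrt (by positivity), sq_sqrt hN, add_sub_cancel_right]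

lemma diagPoint_pos (hN : 0 < N) : 0 < diagPoint N := by
  have hsqrt_pos : 0 < √N := sqrt_pos.2 hN
  have one_le_sqrt : 1 ≤ √(1 + N) := one_le_sqrt.2 (by linarith)
  unfold diagPoint
  linarith

lemma one_add_diagPoint_add_diagPoint (N : ℝ) :
    1 + diagPoint N + diagPoint N = √(1 + N) + √N := by
  unfold diagPoint
  ring

lemma one_div_sqrt_one_add_add_sqrt (hN : 0 ≤ N) :
    1 / (√(1 + N) + √N) = √(1 + N) - √N := by
  rw [div_eq_iff (by positivity)]
  linear_combination -sq_sqrt_one_add_sub_sq_sqrt hN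

lemma one_add_diagPoint_div_diagPoint (hN : 0 < N) :
    (1 + diagPoint N) / diagPoint N = (1 + √(1 + N)) / √N := by
  rw [div_eq_div_iff (diagPoint_pos hN).ne' (sqrt_pos.2 hN).ne', diagPoint]
  linear_combination -(1 / 2) * sq_sqrt_one_add_sub_sq_sqrt hN.le

theorem reducedG_diagPoint (hN : 0 < N) :
    reducedG N (diagPoint N) (diagPoint N) =
      √(1 + N) + N * log ((1 + √(1 + N)) / √N) := by
  rw [reducedG, one_add_diagPoint_add_diagPoint, one_div_sqrt_one_add_add_sqrt hN.le,
    one_add_diagPoint_div_diagPoint hN]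
  ring

end DiagPoint

section Scaling

variable {B L : ℝ}

lemma mul_sq_mul_reducedG (hB : B ≠ 0) (hL : L ≠ 0) (v s t : ℝ) :
    B * L ^ 2 * reducedG (v / (B ^ 2 * L ^ 2)) s t =
      B * L ^ 2 / 2 * (1 + t + s + 1 / (1 + t + s)) +
        v / (2 * B) * (log ((1 + t) / t) + log ((1 + s) / s)) := by
  have hcoeff : B * L ^ 2 * (v / (B ^ 2 * L ^ 2) / 2) = v / (2 * B) := by field_simp
  rw [reducedG, ← hcoeff]
  ring

lemma sqrt_sq_mul_sq_div_four_add (hB : 0 < B) (hL : 0 < L) (v r : ℝ) :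
    √(B ^ 2 * r ^ 2 / 4 + v) = B * L * √(v / (B ^ 2 * L ^ 2) + (r / (2 * L)) ^ 2) := by
  have hfactor : B ^ 2 * r ^ 2 / 4 + v =
      (B * L) ^ 2 * (v / (B ^ 2 * L ^ 2) + (r / (2 * L)) ^ 2) := by
    field_simp
    ring
  rw [hfactor, sqrt_mul (by positivity), sqrt_sq (by positivity)]

lemma integral_sqrt_sq_mul_sq_div_four_add (hB : 0 < B) (hL : 0 < L) (v : ℝ) :
    ∫ r in (0 : ℝ)..(2 * L), √(B ^ 2 * r ^ 2 / 4 + v) =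
      B * L ^ 2 * (2 * ∫ u in (0 : ℝ)..1, √(v / (B ^ 2 * L ^ 2) + u ^ 2)) := by
  have h2L : 2 * L ≠ 0 := by positivity
  simp only [sqrt_sq_mul_sq_div_four_add hB hL, intervalIntegral.integral_const_mul]
  rw [intervalIntegral.integral_comp_div (fun u ↦ √(v / (B ^ 2 * L ^ 2) + u ^ 2)) h2L,
    zero_div, div_self h2L, smul_eq_mul]
  ring

end Scaling

/-- the value of `g` at its minimum:
`g(t⋆,t⋆) = BL²(√(1+N) + N log((1+√(1+N))/√N)) = ∫_0^{2L} √(B²r²/4 + (-v0)) dr`. -/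
theorem stmt_13 (B L v0 : ℝ) (hB : 0 < B) (hL : 0 < L) (hv0 : v0 < 0)
    (g : ℝ → ℝ → ℝ)
    (hg : ∀ s t : ℝ, g s t = B * L^2 / 2 * (1 + t + s + 1/(1 + t + s))
        + (-v0) / (2*B) * (Real.log ((1+t)/t) + Real.log ((1+s)/s)))
    (N tstar : ℝ) (hN : N = (-v0) / (B^2 * L^2))
    (htstar : tstar = 1/2 * Real.sqrt N - 1/2 + 1/2 * Real.sqrt (1 + N)) :
    g tstar tstar
      = B * L^2 * (Real.sqrt (1 + N) + N * Real.log ((1 + Real.sqrt (1 + N)) / Real.sqrt N))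
    ∧ g tstar tstar = ∫ r in (0:ℝ)..(2*L), Real.sqrt (B^2 * r^2 / 4 + (-v0)) := by
  have hNpos : 0 < N := hN ▸ div_pos (neg_pos.2 hv0) (by positivity)
  have g_eq : g tstar tstar = B * L ^ 2 * reducedG N (diagPoint N) (diagPoint N) := by
    rw [show tstar = diagPoint N from htstar, hg, hN, mul_sq_mul_reducedG hB.ne' hL.ne']
  have integral_eq : ∫ r in (0 : ℝ)..(2 * L), √(B ^ 2 * r ^ 2 / 4 + -v0) =
      B * L ^ 2 * (2 * ∫ u in (0 : ℝ)..1, √(N + u ^ 2)) := by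
    rw [hN, integral_sqrt_sq_mul_sq_div_four_add hB hL]
  rw [g_eq, integral_eq, reducedG_diagPoint hNpos, two_mul_integral_zero_one_sqrt_add_sq hNpos]
  exact ⟨rfl, rfl⟩
end

section
/- Let B > 0, h > 0 and μ ∈ ℝ, and set α = 1/2 − μ/(2Bh); assume α > 0. Define u : (0,∞) → ℝ by u(r) = exp(−B r²/(4h)) · ∫_0^∞ exp(−B r² t/(2h)) · t^{α−1} (1+t)^{−α} dt. Then u is twice differentiable on (0,∞) and satisfies the radial Schrödinger equation −h²·(u''(r) + u'(r)/r) + (B²r²/4)·u(r) = μ·u(r) for every r > 0. -/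
open MeasureTheory Real

/-!
`∫₀^∞ exp(-zt) t^(a-1) (1+t)^(b-a-1) dt` is `Γ(a) U(a, b, z)`, with `U` Tricomi's confluent
hypergeometric function. Each `z`-derivative brings down a factor `-t`, which raises `a` and `b` by
one, so Kummer's equation `z w'' + (b - z) w' - a w = 0` becomes a relation between three such
integrals: it says that the derivative in `t` of `exp(-zt) t^a (1+t)^(b-a)`, which vanishes at both
ends of `(0, ∞)`, integrates to zero. The substitution `u(r) = exp(-cr²/4) w(cr²/2)` turns Kummer's
equation into the radial harmonic oscillator in dimension `2b`; the theorem is the case `b = 1`,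
`c = B/h`.
-/

lemma one_add_rpow_le {t : ℝ} (ht : 0 ≤ t) (p : ℝ) : (1 + t) ^ p ≤ 2 ^ |p| * (1 + t ^ |p|) := by
  have max_rpow_le : max 1 t ^ |p| ≤ 1 + t ^ |p| := by
    have := rpow_nonneg ht |p|
    rcases max_cases 1 t with ⟨h, -⟩ | ⟨h, -⟩ <;> rw [h]
    · simpa only [one_rpow, le_add_iff_nonneg_right]
    · linarith
  calc (1 + t) ^ p
      ≤ (1 + t) ^ |p| := rpow_le_rpow_of_exponent_le (by linarith) (le_abs_self p)
    _ ≤ (2 * max 1 t) ^ |p| := by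
        gcongr
        linarith [le_max_left 1 t, le_max_right 1 t]
    _ = 2 ^ |p| * max 1 t ^ |p| := mul_rpow zero_le_two (by positivity)
    _ ≤ 2 ^ |p| * (1 + t ^ |p|) := by gcongr

section TricomiIntegral

open Topology

/-- The integrand of the Laplace integral for Tricomi's function `Γ(a) U(a, b, z)`, meant for
`0 < t`. -/
noncomputable def tricomiIntegrand (a b z t : ℝ) : ℝ :=
  exp (-z * t) * t ^ (a - 1) * (1 + t) ^ (b - a - 1)

/-- The Laplace integral for `Γ(a) U(a, b, z)`, where `U` is Tricomi's confluent hypergeometric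
function; it converges for `0 < a` and `0 < z`. -/
noncomputable def tricomiIntegral (a b z : ℝ) : ℝ :=
  ∫ t in Set.Ioi 0, tricomiIntegrand a b z t

variable {a b z t : ℝ}

lemma tricomiIntegrand_nonneg (ht : 0 < t) : 0 ≤ tricomiIntegrand a b z t := by
  unfold tricomiIntegrand
  positivity

@[fun_prop]
lemma measurable_tricomiIntegrand : Measurable (tricomiIntegrand a b z) := by
  unfold tricomiIntegrand
  fun_prop

lemma tricomiIntegrand_add_one_add_one (ht : 0 < t) :
    tricomiIntegrand (a + 1) (b + 1) z t = t * tricomiIntegrand a b z t := by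
  have exponent : b + 1 - (a + 1) - 1 = b - a - 1 := by ring
  rw [tricomiIntegrand, tricomiIntegrand, exponent, add_sub_right_comm, rpow_add_one ht.ne']
  ring

lemma integrableOn_tricomiIntegrand (ha : 0 < a) (hz : 0 < z) :
    IntegrableOn (tricomiIntegrand a b z) (Set.Ioi 0) := by
  set p := |b - a - 1|
  have gamma_integrable {s : ℝ} (hs : -1 < s) :
      IntegrableOn (fun t : ℝ ↦ t ^ s * exp (-z * t)) (Set.Ioi 0) := by
    simpa only [rpow_one] using integrableOn_rpow_mul_exp_neg_mul_rpow hs one_pos hz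
  have bound_integrable := ((gamma_integrable (s := a - 1) (by linarith)).add
    (gamma_integrable (s := a - 1 + p) (by linarith [abs_nonneg (b - a - 1)]))).const_mul (2 ^ p)
  refine bound_integrable.mono' (by fun_prop) ?_
  filter_upwards [ae_restrict_mem measurableSet_Ioi] with t (ht : 0 < t)
  calc ‖tricomiIntegrand a b z t‖
      = exp (-z * t) * t ^ (a - 1) * (1 + t) ^ (b - a - 1) :=
        norm_of_nonneg (tricomiIntegrand_nonneg ht)
    _ ≤ exp (-z * t) * t ^ (a - 1) * (2 ^ p * (1 + t ^ p)) := by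
        gcongr
        exact one_add_rpow_le ht.le _
    _ = 2 ^ p * (t ^ (a - 1) * exp (-z * t) + t ^ (a - 1 + p) * exp (-z * t)) := by
        rw [rpow_add ht]
        ring

lemma antitone_tricomiIntegrand (ht : 0 < t) : Antitone fun z ↦ tricomiIntegrand a b z t := by
  intro z₁ z₂ hz
  simp only [tricomiIntegrand]
  gcongr

lemma hasDerivAt_tricomiIntegrand_parameter (ht : 0 < t) :
    HasDerivAt (fun z ↦ tricomiIntegrand a b z t) (-tricomiIntegrand (a + 1) (b + 1) z t) z := by
  rw [tricomiIntegrand_add_one_add_one ht]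
  refine ((((hasDerivAt_neg z).mul_const t).exp.mul_const _).mul_const _).congr_deriv ?_
  rw [tricomiIntegrand]
  ring

lemma hasDerivAt_tricomiIntegral (ha : 0 < a) (hz : 0 < z) :
    HasDerivAt (tricomiIntegral a b) (-tricomiIntegral (a + 1) (b + 1) z) z := by
  rw [tricomiIntegral, ← integral_neg]
  refine (hasDerivAt_integral_of_dominated_loc_of_deriv_le
    (F := tricomiIntegrand a b) (F' := fun z t ↦ -tricomiIntegrand (a + 1) (b + 1) z t)
    (bound := tricomiIntegrand (a + 1) (b + 1) (z / 2))
    (Ioi_mem_nhds (half_lt_self hz)) (.of_forall fun _ ↦ by fun_prop)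
    (integrableOn_tricomiIntegrand ha hz) (by fun_prop) ?_
    (integrableOn_tricomiIntegrand (by positivity) (half_pos hz)) ?_).2
  · filter_upwards [ae_restrict_mem measurableSet_Ioi] with t ht x hx
    rw [norm_neg, norm_of_nonneg (tricomiIntegrand_nonneg ht)]
    exact antitone_tricomiIntegrand ht (le_of_lt hx)
  · filter_upwards [ae_restrict_mem measurableSet_Ioi] with t ht x _
    exact hasDerivAt_tricomiIntegrand_parameter ht

lemma eventually_hasDerivAt_tricomiIntegral (ha : 0 < a) (hz : 0 < z) :
    ∀ᶠ x in 𝓝 z, HasDerivAt (tricomiIntegral a b) (-tricomiIntegral (a + 1) (b + 1) x) x := by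
  filter_upwards [Ioi_mem_nhds hz] with x hx using hasDerivAt_tricomiIntegral ha hx

lemma hasDerivAt_exp_mul_rpow_mul_one_add_rpow (ht : 0 < t) :
    HasDerivAt (fun t ↦ exp (-z * t) * t ^ a * (1 + t) ^ (b - a))
      (a * tricomiIntegrand a b z t + (b - z) * tricomiIntegrand (a + 1) (b + 1) z t
        - z * tricomiIntegrand (a + 1 + 1) (b + 1 + 1) z t) t := by
  have hasDerivAt_exp : HasDerivAt (fun t ↦ exp (-z * t)) (exp (-z * t) * (-z * 1)) t :=
    ((hasDerivAt_id t).const_mul (-z)).exp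
  have hasDerivAt_one_add_rpow : HasDerivAt (fun t ↦ (1 + t) ^ (b - a))
      (1 * (b - a) * (1 + t) ^ (b - a - 1)) t :=
    ((hasDerivAt_id t).const_add 1).rpow_const (.inl (by simp only [id]; positivity))
  refine ((hasDerivAt_exp.mul (hasDerivAt_rpow_const (.inl ht.ne'))).mul
    hasDerivAt_one_add_rpow).congr_deriv ?_
  have rpow_eq : t ^ a = t ^ (a - 1) * t := by rw [← rpow_add_one ht.ne', sub_add_cancel]
  have one_add_rpow_eq : (1 + t) ^ (b - a) = (1 + t) ^ (b - a - 1) * (1 + t) := by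
    rw [← rpow_add_one (by positivity), sub_add_cancel]
  simp only [Pi.mul_apply, tricomiIntegrand_add_one_add_one ht]
  simp only [tricomiIntegrand, rpow_eq, one_add_rpow_eq]
  ring

lemma integrableOn_exp_mul_rpow_mul_one_add_rpow (ha : 0 < a) (hz : 0 < z) :
    IntegrableOn (fun t ↦ exp (-z * t) * t ^ a * (1 + t) ^ (b - a)) (Set.Ioi 0) := by
  convert integrableOn_tricomiIntegrand (b := b + 2) (add_pos ha one_pos) hz using 2 with t
  rw [tricomiIntegrand]
  ring_nf

lemma tricomiIntegral_kummer_equation (ha : 0 < a) (hz : 0 < z) :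
    z * tricomiIntegral (a + 1 + 1) (b + 1 + 1) z
      + (b - z) * -tricomiIntegral (a + 1) (b + 1) z - a * tricomiIntegral a b z = 0 := by
  have int₀ := (integrableOn_tricomiIntegrand (b := b) ha hz).const_mul a
  have int₁ := (integrableOn_tricomiIntegrand (a := a + 1) (b := b + 1)
    (by positivity) hz).const_mul (b - z)
  have int₂ := (integrableOn_tricomiIntegrand (a := a + 1 + 1) (b := b + 1 + 1)
    (by positivity) hz).const_mul z
  have int₀₁ : IntegrableOn (fun t ↦ a * tricomiIntegrand a b z t
      + (b - z) * tricomiIntegrand (a + 1) (b + 1) z t) (Set.Ioi 0) := int₀.add int₁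
  have continuousAt_zero :
      ContinuousAt (fun t ↦ exp (-z * t) * t ^ a * (1 + t) ^ (b - a)) 0 :=
    (ContinuousAt.mul (by fun_prop) (continuousAt_rpow_const _ _ (.inr ha.le))).mul
      (ContinuousAt.rpow_const (by fun_prop) (.inl (by norm_num)))
  have hasDerivAt_boundary_term (t : ℝ) (ht : t ∈ Set.Ioi 0) :=
    hasDerivAt_exp_mul_rpow_mul_one_add_rpow (a := a) (b := b) (z := z) ht
  have integral_deriv := integral_Ioi_of_hasDerivAt_of_tendsto
    continuousAt_zero.continuousWithinAt hasDerivAt_boundary_term (int₀₁.sub int₂)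
    (tendsto_zero_of_hasDerivAt_of_integrableOn_Ioi hasDerivAt_boundary_term (int₀₁.sub int₂)
      (integrableOn_exp_mul_rpow_mul_one_add_rpow ha hz))
  rw [integral_sub int₀₁ int₂, integral_add int₀ int₁] at integral_deriv
  simp only [integral_const_mul, zero_rpow ha.ne', mul_zero, zero_mul, sub_zero]
    at integral_deriv
  simp only [tricomiIntegral]
  linear_combination -integral_deriv

end TricomiIntegral

section OscillatorAnsatz

open Filter Topology

/-- The substitution `u(r) = exp(-cr²/4) w(cr²/2)` reducing the radial harmonic oscillator equation
for `u` to Kummer's equation for `w`. -/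
noncomputable def oscillatorAnsatz (c : ℝ) (w : ℝ → ℝ) (r : ℝ) : ℝ :=
  exp (-(c * r ^ 2 / 4)) * w (c * r ^ 2 / 2)

variable {w w' : ℝ → ℝ} {a b c r w₁ w₂ : ℝ}

lemma hasDerivAt_oscillatorAnsatz (hw : HasDerivAt w w₁ (c * r ^ 2 / 2)) :
    HasDerivAt (oscillatorAnsatz c w)
      (c * r * (exp (-(c * r ^ 2 / 4)) * (w₁ - w (c * r ^ 2 / 2) / 2))) r := by
  have hasDerivAt_mul_sq (k : ℝ) : HasDerivAt (fun r ↦ c * r ^ 2 / k) (c * (2 * r) / k) r := by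
    simpa using ((hasDerivAt_pow 2 r).const_mul c).div_const k
  refine ((hasDerivAt_mul_sq 4).neg.exp.mul (hw.comp r (hasDerivAt_mul_sq 2))).congr_deriv ?_
  simp only [Pi.neg_apply, Function.comp_apply]
  ring

lemma hasDerivAt_deriv_oscillatorAnsatz
    (hw : ∀ᶠ z in 𝓝 (c * r ^ 2 / 2), HasDerivAt w (w' z) z)
    (hw' : HasDerivAt w' w₂ (c * r ^ 2 / 2)) :
    HasDerivAt (deriv (oscillatorAnsatz c w))
      (exp (-(c * r ^ 2 / 4)) * (c * (w' (c * r ^ 2 / 2) - w (c * r ^ 2 / 2) / 2)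
        + (c * r) ^ 2 * (w₂ - w' (c * r ^ 2 / 2) + w (c * r ^ 2 / 2) / 4))) r := by
  have deriv_eventuallyEq : deriv (oscillatorAnsatz c w) =ᶠ[𝓝 r]
      fun r ↦ c * r * oscillatorAnsatz c (fun z ↦ w' z - w z / 2) r := by
    have tendsto_mul_sq : Tendsto (fun r ↦ c * r ^ 2 / 2) (𝓝 r) (𝓝 (c * r ^ 2 / 2)) :=
      Continuous.tendsto (by fun_prop) r
    filter_upwards [tendsto_mul_sq.eventually hw] with x hx
    exact (hasDerivAt_oscillatorAnsatz hx).deriv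
  refine HasDerivAt.congr_of_eventuallyEq ?_ deriv_eventuallyEq
  refine (((hasDerivAt_id r).const_mul c).mul (hasDerivAt_oscillatorAnsatz
    (hw'.sub (hw.self_of_nhds.div_const 2)))).congr_deriv ?_
  simp only [oscillatorAnsatz, id, Pi.sub_apply]
  ring

lemma oscillatorAnsatz_radial_equation (hr : r ≠ 0)
    (hw : ∀ᶠ z in 𝓝 (c * r ^ 2 / 2), HasDerivAt w (w' z) z)
    (hw' : HasDerivAt w' w₂ (c * r ^ 2 / 2))
    (kummer : c * r ^ 2 / 2 * w₂ + (b - c * r ^ 2 / 2) * w' (c * r ^ 2 / 2)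
      - a * w (c * r ^ 2 / 2) = 0) :
    -(deriv (deriv (oscillatorAnsatz c w)) r + (2 * b - 1) * (deriv (oscillatorAnsatz c w) r / r))
      + c ^ 2 * r ^ 2 / 4 * oscillatorAnsatz c w r = c * (b - 2 * a) * oscillatorAnsatz c w r := by
  rw [(hasDerivAt_deriv_oscillatorAnsatz hw hw').deriv,
    (hasDerivAt_oscillatorAnsatz hw.self_of_nhds).deriv, mul_right_comm c r,
    mul_div_cancel_right₀ _ hr, oscillatorAnsatz]
  linear_combination -2 * c * exp (-(c * r ^ 2 / 4)) * kummer

end OscillatorAnsatz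

/-- the function
`u(r) = exp(-Br²/(4h)) ∫_0^∞ exp(-Br²t/(2h)) t^{α-1}(1+t)^{-α} dt`
is twice differentiable on `(0,∞)` and satisfies the radial Schrödinger equation
`-h²(u'' + u'/r) + (B²r²/4)u = μu` there. -/
theorem stmt_15 (B h μ α : ℝ) (hB : 0 < B) (hh : 0 < h)
    (hα : α = 1/2 - μ / (2*B*h)) (hαpos : 0 < α)
    (u : ℝ → ℝ)
    (hu : ∀ r : ℝ, 0 < r → u r = Real.exp (-B * r^2 / (4*h)) *
        ∫ t in Set.Ioi (0:ℝ), Real.exp (-B * r^2 * t / (2*h)) * t ^ (α - 1) * (1+t) ^ (-α)) :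
    (∀ r ∈ Set.Ioi (0:ℝ), DifferentiableAt ℝ u r)
    ∧ (∀ r ∈ Set.Ioi (0:ℝ), DifferentiableAt ℝ (deriv u) r)
    ∧ (∀ r : ℝ, 0 < r →
        -h^2 * (deriv (deriv u) r + deriv u r / r) + B^2 * r^2 / 4 * u r = μ * u r) := by
  have u_eventuallyEq {r : ℝ} (hr : 0 < r) :
      u =ᶠ[nhds r] oscillatorAnsatz (B / h) (tricomiIntegral α 1) := by
    filter_upwards [Ioi_mem_nhds hr] with x hx
    rw [hu x hx, oscillatorAnsatz, tricomiIntegral]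
    simp only [tricomiIntegrand]
    ring_nf
  have argument_pos {r : ℝ} (hr : 0 < r) : 0 < B / h * r ^ 2 / 2 := by positivity
  have hasDerivAt_w {r : ℝ} (hr : 0 < r) :=
    eventually_hasDerivAt_tricomiIntegral (b := 1) hαpos (argument_pos hr)
  have hasDerivAt_w' {r : ℝ} (hr : 0 < r) :=
    (hasDerivAt_tricomiIntegral (b := 1 + 1) (add_pos hαpos one_pos) (argument_pos hr)).neg
  refine ⟨fun r hr ↦ ?_, fun r hr ↦ ?_, fun r hr ↦ ?_⟩
  · exact (u_eventuallyEq hr).differentiableAt_iff.2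
      (hasDerivAt_oscillatorAnsatz (hasDerivAt_w hr).self_of_nhds).differentiableAt
  · exact (u_eventuallyEq hr).deriv.differentiableAt_iff.2
      (hasDerivAt_deriv_oscillatorAnsatz (hasDerivAt_w hr) (hasDerivAt_w' hr)).differentiableAt
  · have radial_equation := oscillatorAnsatz_radial_equation (a := α) (b := 1) hr.ne'
      (hasDerivAt_w hr) (hasDerivAt_w' hr)
      (by simpa only [neg_neg] using tricomiIntegral_kummer_equation hαpos (argument_pos hr))
    have μ_eq : μ = h ^ 2 * (B / h * (1 - 2 * α)) := by rw [hα]; field_simp; ring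
    have B_sq_eq : B ^ 2 = h ^ 2 * (B / h) ^ 2 := by field_simp
    rw [(u_eventuallyEq hr).deriv.deriv_eq, (u_eventuallyEq hr).deriv_eq,
      (u_eventuallyEq hr).eq_of_nhds, μ_eq, B_sq_eq]
    linear_combination h ^ 2 * radial_equation
end
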